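/- arXiv:2401.06208 — 3 statements merged into one kernel-verified Lean document; each statement's English description precedes it below -/
import Mathlib

section
/- Let F be a field, let c ∈ F, let d ≥ 1 be an integer, and set g = 2^(d−1). Suppose u, v ∈ F satisfy u^g = c and v² = c·u. If x, y ∈ F with x ≠ 0 satisfy y² = x^(2^d + 1) − c·x, then (v·y/x^(g+1))² = (−u/x)^(2^d + 1) − c·(−u/x). -/
/-- With `g = 2^(d-1)`, `u^g = c`, `v² = c·u`, `x ≠ 0`, and `y² = x^(2^d+1) - c·x`,
one has `(v·y/x^(g+1))² = (-u/x)^(2^d+1) - c·(-u/x)`, i.e.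
`β_d(x,y) = (-c^(1/g)/x, c^b·y/x^(g+1))` is an automorphism of `C'_{2^d+1}`. -/
theorem beta_d_automorphism {F : Type*} [Field F] (c : F) (d : ℕ) (hd : 1 ≤ d)
    (g : ℕ) (hg : g = 2 ^ (d - 1))
    (u v : F) (hu : u ^ g = c) (hv : v ^ 2 = c * u)
    (x y : F) (hx : x ≠ 0) (h : y ^ 2 = x ^ (2 ^ d + 1) - c * x) :
    (v * y / x ^ (g + 1)) ^ 2 = (-u / x) ^ (2 ^ d + 1) - c * (-u / x) := by
  have h2 : 2 ^ d = 2 * g := by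
    obtain ⟨k, rfl⟩ := Nat.exists_eq_add_of_le' hd
    rw [hg, Nat.add_sub_cancel, pow_succ, mul_comm]
  rw [h2] at h ⊢
  have h3 : (-u / x) ^ (2 * g + 1) = -(c ^ 2 * u) / x ^ (2 * g + 1) := by
    rw [div_pow, Odd.neg_pow ⟨g, rfl⟩, pow_succ u, mul_comm 2 g, pow_mul, hu]
  have h4 : (x ^ (g + 1)) ^ 2 = x ^ (2 * g + 1) * x := by ring
  rw [h3, div_pow, mul_pow, hv, h, h4]
  have hp : x ^ (2 * g + 1) ≠ 0 := pow_ne_zero _ hx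
  generalize x ^ (2 * g + 1) = p at *
  field_simp
  ring
end

section
/- Let d ≥ 1 be an integer, let g = 2^(d−1), and let c be a nonzero rational number. Let ζ ∈ ℂ be a primitive 2^(d+1)-th root of unity, let r ∈ ℂ satisfy r^(2g) = c, and let K = ℚ(ζ, r) ⊆ ℂ. Assume K/ℚ is Galois of degree 2^(2d). If σ₋₁, σ₅, τ ∈ Gal(K/ℚ) satisfy σ₋₁(ζ) = ζ^(−1), σ₋₁(r) = r, σ₅(ζ) = ζ^5, σ₅(r) = r, τ(ζ) = ζ, and τ(r) = ζ²·r, then the subgroup of Gal(K/ℚ) generated by {σ₋₁, σ₅, τ} equals Gal(K/ℚ). -/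
theorem five_pow_two_pow_aux (m : ℕ) : ∃ u : ℤ, (5 : ℤ) ^ (2 ^ m) = 1 + 2 ^ (m + 2) * (2 * u + 1) := by
  induction m with
  | zero => exact ⟨0, by norm_num⟩
  | succ m ih =>
    obtain ⟨u, hu⟩ := ih
    refine ⟨u + 2 ^ m * (2 * u + 1) ^ 2, ?_⟩
    rw [pow_succ 2 m, pow_mul, hu]
    ring

theorem exists_five_pow_aux (m : ℕ) (a : ℤ) (ha : a % 4 = 1) :
    ∃ k : ℕ, (2 : ℤ) ^ (m + 2) ∣ a - 5 ^ k := by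
  induction m with
  | zero => exact ⟨0, by norm_num; omega⟩
  | succ m ih =>
    obtain ⟨k, t, ht⟩ := ih
    obtain ⟨u, hu⟩ := five_pow_two_pow_aux m
    rcases Int.even_or_odd' t with ⟨s, hs | hs⟩
    · exact ⟨k, s, by rw [ht, hs]; ring⟩
    · have h5 : Odd ((5 : ℤ) ^ k) := Odd.pow (by decide)
      obtain ⟨w, hw⟩ := h5
      refine ⟨k + 2 ^ m, s - w - u * 5 ^ k, ?_⟩
      have : a = 5 ^ k + 2 ^ (m + 2) * (2 * s + 1) := by rw [← hs]; linarith
      rw [this, pow_add 5 k, hu]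
      have e : (2 : ℤ) ^ (m + 1 + 2) = 2 * 2 ^ (m + 2) := by ring
      rw [e]
      linear_combination (-(2 : ℤ) ^ (m + 2)) * hw

theorem exists_pm_five_pow_aux (m : ℕ) (a : ℤ) (ha : a % 2 = 1) :
    ∃ k : ℕ, (2 : ℤ) ^ (m + 2) ∣ a - 5 ^ k ∨ (2 : ℤ) ^ (m + 2) ∣ a + 5 ^ k := by
  rcases (by omega : a % 4 = 1 ∨ (-a) % 4 = 1) with h | h
  · obtain ⟨k, hk⟩ := exists_five_pow_aux m a h
    exact ⟨k, Or.inl hk⟩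
  · obtain ⟨k, hk⟩ := exists_five_pow_aux m _ h
    refine ⟨k, Or.inr ?_⟩
    have h2 := dvd_neg.mpr hk
    rwa [show -(-a - 5 ^ k) = a + 5 ^ k by ring] at h2


/-- For `d ≥ 1`, `g = 2^(d-1)`, `c ∈ ℚˣ`, `ζ` a primitive `2^(d+1)`-th root of unity,
`r` with `r^(2g) = c`, and `K = ℚ(ζ, r)` Galois of degree `2^(2d)` over `ℚ`, the
automorphisms `σ₋₁, σ₅, τ` acting as stated generate `Gal(K/ℚ)`. -/
theorem galois_group_generated_by_three (d : ℕ) (hd : 1 ≤ d)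
    (g : ℕ) (hg : g = 2 ^ (d - 1)) (c : ℚ) (hc : c ≠ 0)
    (ζ r : ℂ) (hζ : IsPrimitiveRoot ζ (2 ^ (d + 1))) (hr : r ^ (2 * g) = (c : ℂ))
    (K : IntermediateField ℚ ℂ) (hK : K = IntermediateField.adjoin ℚ {ζ, r})
    [IsGalois ℚ K] (hdeg : Module.finrank ℚ K = 2 ^ (2 * d))
    (hζK : ζ ∈ K) (hrK : r ∈ K)
    (σ₁ σ₅ τ : K ≃ₐ[ℚ] K)
    (hσ₁ζ : σ₁ ⟨ζ, hζK⟩ = (⟨ζ, hζK⟩ : K)⁻¹) (hσ₁r : σ₁ ⟨r, hrK⟩ = ⟨r, hrK⟩)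
    (hσ₅ζ : σ₅ ⟨ζ, hζK⟩ = ⟨ζ, hζK⟩ ^ 5) (hσ₅r : σ₅ ⟨r, hrK⟩ = ⟨r, hrK⟩)
    (hτζ : τ ⟨ζ, hζK⟩ = ⟨ζ, hζK⟩) (hτr : τ ⟨r, hrK⟩ = ⟨ζ, hζK⟩ ^ 2 * ⟨r, hrK⟩) :
    Subgroup.closure {σ₁, σ₅, τ} = (⊤ : Subgroup (K ≃ₐ[ℚ] K)) := by
  set z : K := ⟨ζ, hζK⟩ with hz
  set x : K := ⟨r, hrK⟩ with hx
  have hzp : IsPrimitiveRoot z (2 ^ (d + 1)) :=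
    IsPrimitiveRoot.of_map_of_injective (f := K.val) (by simpa [hz] using hζ) K.val.injective
  have hz0 : z ≠ 0 := hzp.ne_zero (by positivity)
  have h2g : 2 * g = 2 ^ d := by
    rw [hg, ← pow_succ']; congr 1; omega
  have hxc : x ^ (2 ^ d) = algebraMap ℚ K c := by
    apply Subtype.ext
    rw [← h2g]
    simpa [hx] using hr
  have hx0 : x ≠ 0 := by
    intro h
    rw [h, zero_pow (by positivity)] at hxc
    exact hc ((map_eq_zero _).1 hxc.symm)
  have h5 : ∀ k : ℕ, (σ₅ ^ k) z = z ^ (5 ^ k) ∧ (σ₅ ^ k) x = x := by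
    intro k
    induction k with
    | zero => simp
    | succ k ih =>
      rw [pow_succ', AlgEquiv.mul_apply, AlgEquiv.mul_apply, ih.1, ih.2, map_pow, hσ₅ζ, ← pow_mul,
        pow_succ']
      exact ⟨rfl, hσ₅r⟩
  have ht : ∀ k : ℕ, (τ ^ k) z = z ∧ (τ ^ k) x = (z ^ 2) ^ k * x := by
    intro k
    induction k with
    | zero => simp
    | succ k ih =>
      rw [pow_succ', AlgEquiv.mul_apply, AlgEquiv.mul_apply, ih.1, ih.2, map_mul, map_pow, map_pow,
        hτζ, hτr]
      exact ⟨rfl, by ring⟩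
  have hext : ∀ s t : K ≃ₐ[ℚ] K, s z = t z → s x = t x → s = t := by
    intro s t h1 h2
    have : (s : K →ₐ[ℚ] K) = t := by
      refine IntermediateField.algHom_ext_of_eq_adjoin ℚ hK ?_
      intro y hy
      rcases hy with rfl | rfl
      · exact h1
      · exact h2
    exact AlgEquiv.ext fun y => DFunLike.congr_fun this y
  rw [eq_top_iff]
  intro s _
  have m1 : σ₁ ∈ Subgroup.closure {σ₁, σ₅, τ} := Subgroup.subset_closure (by simp)
  have m5 : σ₅ ∈ Subgroup.closure {σ₁, σ₅, τ} := Subgroup.subset_closure (by simp)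
  have mt : τ ∈ Subgroup.closure {σ₁, σ₅, τ} := Subgroup.subset_closure (by simp)
  have hsz : IsPrimitiveRoot (s z) (2 ^ (d + 1)) := hzp.map_of_injective s.injective
  obtain ⟨a, -, hac, ha⟩ := hzp.isPrimitiveRoot_iff.1 hsz
  have haodd : a % 2 = 1 := by
    have := Nat.Coprime.coprime_dvd_right (dvd_pow_self 2 (Nat.succ_ne_zero d)) hac
    exact Nat.odd_iff.1 (Nat.coprime_two_right.1 this)
  have hw : (s x / x) ^ (2 ^ d) = 1 := by
    rw [div_pow, ← map_pow, hxc, AlgEquiv.commutes, ← hxc, div_self (pow_ne_zero _ hx0)]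
  have hz2 : IsPrimitiveRoot (z ^ 2) (2 ^ d) := hzp.pow (by positivity) (pow_succ' 2 d)
  obtain ⟨j, -, hj⟩ := hz2.eq_pow_of_pow_eq_one hw
  have hsx : s x = (z ^ 2) ^ j * x := by rw [hj, div_mul_cancel₀ _ hx0]
  obtain ⟨k, hk⟩ := exists_pm_five_pow_aux (d - 1) a (by omega)
  have hd2 : d - 1 + 2 = d + 1 := by omega
  rw [hd2] at hk
  rcases hk with hk | hk
  · have e : s = τ ^ j * σ₅ ^ k := by
      apply hext
      · rw [AlgEquiv.mul_apply, (h5 k).1, map_pow, (ht j).1, ← ha]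
        have := (hzp.zpow_eq_one_iff_dvd ((a : ℤ) - 5 ^ k)).2 (by exact_mod_cast hk)
        rw [zpow_sub₀ hz0, div_eq_one_iff_eq (zpow_ne_zero _ hz0)] at this
        exact_mod_cast this
      · rw [AlgEquiv.mul_apply, (h5 k).2, (ht j).2, hsx]
    rw [e]
    exact mul_mem (pow_mem mt _) (pow_mem m5 _)
  · have e : s = τ ^ j * (σ₁ * σ₅ ^ k) := by
      apply hext
      · rw [AlgEquiv.mul_apply, AlgEquiv.mul_apply, (h5 k).1, map_pow, hσ₁ζ, map_pow, map_inv₀,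
          (ht j).1, ← ha]
        have := (hzp.zpow_eq_one_iff_dvd ((a : ℤ) + 5 ^ k)).2 (by exact_mod_cast hk)
        rw [zpow_add₀ hz0] at this
        rw [inv_pow]
        apply eq_inv_of_mul_eq_one_left
        exact_mod_cast this
      · rw [AlgEquiv.mul_apply, AlgEquiv.mul_apply, (h5 k).2, hσ₁r, (ht j).2, hsx]
    rw [e]
    exact mul_mem (pow_mem mt _) (mul_mem m1 (pow_mem m5 _))
end

section
/- For integers 1 ≤ d₁ < d₂, define F₁ = ℚ(i) and, for d ≥ 2, F_d = ℚ(ζ_{2^(d+1)} − ζ_{2^(d+1)}^(−1)) ⊆ ℂ, where ζ_{2^(d+1)} = exp(2πi/2^(d+1)). Then there is no field embedding (ring homomorphism) from F_{d₁} into F_{d₂}. -/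
/-- The CM field `F_d` of the simple factor `X_d`: `F₁ = ℚ(i)` and, for `d ≥ 2`,
`F_d = ℚ(ζ_{2^(d+1)} - ζ_{2^(d+1)}⁻¹)` where `ζ_{2^(d+1)} = exp(2πi/2^(d+1))`. -/
noncomputable def cmField (d : ℕ) : IntermediateField ℚ ℂ :=
  if d = 1 then IntermediateField.adjoin ℚ ({Complex.I} : Set ℂ)
  else IntermediateField.adjoin ℚ
    ({Complex.exp (2 * Real.pi * Complex.I / 2 ^ (d + 1)) -
        (Complex.exp (2 * Real.pi * Complex.I / 2 ^ (d + 1)))⁻¹} : Set ℂ)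

theorem cm_aux_ext (L0 : IntermediateField ℚ ℂ) (η : ℂ) (hη : IsIntegral ℚ η)
    (f : L0 →ₐ[ℚ] ℂ) (hL : L0 ≤ IntermediateField.adjoin ℚ {η}) :
    ∃ φ : IntermediateField.adjoin ℚ {η} →ₐ[ℚ] ℂ,
      φ.comp (IntermediateField.inclusion hL) = f := by
  apply IntermediateField.exists_algHom_adjoin_of_splits
  · intro s hs
    rw [Set.mem_singleton_iff] at hs
    subst hs
    exact ⟨hη, IsAlgClosed.splits _⟩

theorem cm_aux_conj (ζ ξ : ℂ) (hζ : IsIntegral ℚ ζ) (h : minpoly ℚ ζ = minpoly ℚ ξ) :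
    ∃ φ : IntermediateField.adjoin ℚ {ζ} →ₐ[ℚ] ℂ,
      φ ⟨ζ, IntermediateField.mem_adjoin_simple_self ℚ ζ⟩ = ξ := by
  refine ⟨(IntermediateField.algHomAdjoinIntegralEquiv ℚ hζ).symm ⟨ξ, ?_⟩, ?_⟩
  · rw [Polynomial.mem_aroots]
    exact ⟨minpoly.ne_zero hζ, by rw [h]; exact minpoly.aeval _ _⟩
  · exact IntermediateField.algHomAdjoinIntegralEquiv_symm_apply_gen ℚ hζ _

/-- For `1 ≤ d₁ < d₂` there is no field embedding of `F_{d₁}` into `F_{d₂}`. -/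
theorem no_embedding_between_cm_fields (d₁ d₂ : ℕ) (h1 : 1 ≤ d₁) (h2 : d₁ < d₂) :
    IsEmpty (cmField d₁ →+* cmField d₂) := by
  constructor
  intro f
  obtain ⟨η, hη⟩ : ∃ η : ℂ, η = Complex.exp (2 * Real.pi * Complex.I / 2 ^ (d₁ + 1)) := ⟨_, rfl⟩
  obtain ⟨ζ, hζ⟩ : ∃ ζ : ℂ, ζ = Complex.exp (2 * Real.pi * Complex.I / 2 ^ (d₂ + 1)) := ⟨_, rfl⟩
  have pη : IsPrimitiveRoot η (2 ^ (d₁ + 1)) := by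
    have := Complex.isPrimitiveRoot_exp (2 ^ (d₁ + 1)) (by positivity)
    rw [hη]; exact_mod_cast this
  have pζ : IsPrimitiveRoot ζ (2 ^ (d₂ + 1)) := by
    have := Complex.isPrimitiveRoot_exp (2 ^ (d₂ + 1)) (by positivity)
    rw [hζ]; exact_mod_cast this
  have iη : IsIntegral ℚ η := (pη.isIntegral (by positivity)).tower_top
  have iζ : IsIntegral ℚ ζ := (pζ.isIntegral (by positivity)).tower_top
  have η0 : η ≠ 0 := pη.ne_zero (by positivity)
  have ζ0 : ζ ≠ 0 := pζ.ne_zero (by positivity)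
  have e2 : cmField d₂ = IntermediateField.adjoin ℚ {ζ - ζ⁻¹} := by
    rw [cmField, if_neg (by omega), hζ]
  have hI : d₁ = 1 → η = Complex.I := by
    rintro rfl
    rw [hη]
    refine Eq.trans ?_ Complex.exp_pi_div_two_mul_I
    congr 1; ring
  have hmem : η - η⁻¹ ∈ cmField d₁ := by
    by_cases hd : d₁ = 1
    · rw [cmField, if_pos hd, hI hd]
      exact sub_mem (IntermediateField.mem_adjoin_simple_self _ _)
        (inv_mem (IntermediateField.mem_adjoin_simple_self _ _))
    · rw [cmField, if_neg hd, ← hη]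
      exact IntermediateField.mem_adjoin_simple_self _ _
  have hL1 : cmField d₁ ≤ IntermediateField.adjoin ℚ {η} := by
    by_cases hd : d₁ = 1
    · rw [cmField, if_pos hd, hI hd]
    · rw [cmField, if_neg hd, ← hη, IntermediateField.adjoin_simple_le_iff]
      exact sub_mem (IntermediateField.mem_adjoin_simple_self _ _)
        (inv_mem (IntermediateField.mem_adjoin_simple_self _ _))
  have hL2 : cmField d₂ ≤ IntermediateField.adjoin ℚ {ζ} := by
    rw [e2, IntermediateField.adjoin_simple_le_iff]
    exact sub_mem (IntermediateField.mem_adjoin_simple_self _ _)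
        (inv_mem (IntermediateField.mem_adjoin_simple_self _ _))
  obtain ⟨φ, hφ⟩ := cm_aux_ext (cmField d₁) η iη
    (((cmField d₂).val.toRingHom.comp f).toRatAlgHom) hL1
  let η' : IntermediateField.adjoin ℚ {η} := ⟨η, IntermediateField.mem_adjoin_simple_self ℚ η⟩
  let ζ' : IntermediateField.adjoin ℚ {ζ} := ⟨ζ, IntermediateField.mem_adjoin_simple_self ℚ ζ⟩
  obtain ⟨b, hb⟩ : ∃ b, b = f ⟨η - η⁻¹, hmem⟩ := ⟨_, rfl⟩
  have hbφ : (b : ℂ) = φ η' - (φ η')⁻¹ := by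
    have := DFunLike.congr_fun hφ ⟨η - η⁻¹, hmem⟩
    rw [hb, ← map_inv₀, ← map_sub]
    exact this.symm
  have hw : φ η' ^ (2 ^ (d₁ + 1)) = 1 := by
    rw [← map_pow, show η' ^ (2 ^ (d₁ + 1)) = 1 from Subtype.ext pη.pow_eq_one, map_one]
  -- the root of unity is an even power of ζ
  obtain ⟨m, hm⟩ : ∃ m : ℕ, φ η' = ζ ^ (2 * m) := by
    obtain ⟨k, rfl⟩ : ∃ k, d₂ = d₁ + 1 + k := ⟨d₂ - d₁ - 1, by omega⟩
    have p2 : IsPrimitiveRoot (ζ ^ (2 ^ (k + 1))) (2 ^ (d₁ + 1)) :=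
      pζ.pow (by positivity) (by ring)
    have : NeZero (2 ^ (d₁ + 1)) := ⟨by positivity⟩
    obtain ⟨i, -, hi⟩ := p2.eq_pow_of_pow_eq_one hw
    exact ⟨2 ^ k * i, by rw [← hi, ← pow_mul]; congr 1; ring⟩
  have pξ : IsPrimitiveRoot (-ζ⁻¹) (2 ^ (d₂ + 1)) := by
    have hneg : ζ ^ (2 ^ d₂) = -1 := by
      have : IsPrimitiveRoot (ζ ^ (2 ^ d₂)) 2 := pζ.pow (by positivity) (by ring)
      exact this.eq_neg_one_of_two_right
    have : -ζ⁻¹ = (ζ ^ (2 ^ d₂ - 1)) := by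
      have h3 : ζ ^ (2 ^ d₂ - 1) * ζ = -1 := by
        rw [← pow_succ, Nat.sub_add_cancel Nat.one_le_two_pow, hneg]
      field_simp
      rw [mul_comm, h3]
    rw [this]
    apply pζ.pow_of_coprime
    apply Nat.Coprime.pow_right
    rw [Nat.coprime_two_right]
    exact Nat.Even.sub_odd Nat.one_le_two_pow (by simp [Nat.even_pow]; omega) odd_one
  have hmin : minpoly ℚ ζ = minpoly ℚ (-ζ⁻¹) := by
    rw [← Polynomial.cyclotomic_eq_minpoly_rat pζ (by positivity),
      ← Polynomial.cyclotomic_eq_minpoly_rat pξ (by positivity)]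
  obtain ⟨σ, hσ⟩ := cm_aux_conj ζ (-ζ⁻¹) iζ hmin
  change σ ζ' = _ at hσ
  have hfix : ∀ x (hx : x ∈ cmField d₂), σ ⟨x, hL2 hx⟩ = x := by
    intro x hx
    have hx' := hx
    rw [e2] at hx'
    induction hx' using IntermediateField.adjoin_induction with
    | mem y hy =>
      rw [Set.mem_singleton_iff] at hy
      subst hy
      change σ (ζ' - ζ'⁻¹) = _
      rw [map_sub, map_inv₀, hσ]
      field_simp
      ring
    | algebraMap y => exact σ.commutes y
    | add y z hy hz ihy ihz =>
      rw [← e2] at hy hz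
      have := congrArg₂ (· + ·) (ihy hy) (ihz hz)
      exact (map_add σ ⟨y, hL2 hy⟩ ⟨z, hL2 hz⟩).trans this
    | inv y hy ih =>
      rw [← e2] at hy
      conv_rhs => rw [← ih hy]
      exact map_inv₀ σ ⟨y, hL2 hy⟩
    | mul y z hy hz ihy ihz =>
      rw [← e2] at hy hz
      have := congrArg₂ (· * ·) (ihy hy) (ihz hz)
      exact (map_mul σ ⟨y, hL2 hy⟩ ⟨z, hL2 hz⟩).trans this
  have hbσ := hfix b b.2
  have hb2 : (⟨b, hL2 b.2⟩ : IntermediateField.adjoin ℚ {ζ}) = ζ' ^ (2 * m) - (ζ' ^ (2 * m))⁻¹ := by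
    apply Subtype.ext
    change (b : ℂ) = ζ ^ (2 * m) - (ζ ^ (2 * m))⁻¹
    rw [hbφ, hm]
  rw [hb2, map_sub, map_inv₀, map_pow, hσ, hbφ, hm, Even.neg_pow (even_two_mul m), inv_pow,
    inv_inv] at hbσ
  have hb0 : (b : ℂ) = 0 := by
    rw [hbφ, hm]
    linear_combination (-1 / 2 : ℂ) * hbσ
  have hb0' : f ⟨η - η⁻¹, hmem⟩ = 0 := by
    rw [← hb]; exact Subtype.ext hb0
  rw [map_eq_zero] at hb0'
  have h0 : η - η⁻¹ = 0 := congrArg Subtype.val hb0'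
  have hsq : η ^ 2 = 1 := by
    field_simp at h0
    linear_combination h0
  have := Nat.le_of_dvd (by norm_num) (pη.dvd_of_pow_eq_one 2 hsq)
  have h4 : 2 ^ 2 ≤ 2 ^ (d₁ + 1) := Nat.pow_le_pow_right (by norm_num) (by omega)
  omega
end
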